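/- Let H = F(a,b) be the free group on two generators with generating set T = {b} ∪ {aᵏ : k ∈ ℤ, k ≠ 0}, and let φ : H → H be the automorphism determined by φ(a) = b and φ(b) = a. Then φ is not a quasi-isometry of (H, dist_{(H,T)}): there exist no constants L ≥ 1 and C ≥ 0 such that dist_{(H,T)}(φ(h),φ(h′)) ≤ L · dist_{(H,T)}(h,h′) + C for all h, h′ ∈ H. Consequently, the conjugation action h ↦ t h t⁻¹ of the element t of G = ⟨a,b,t ∣ t a t⁻¹ = b, t² = e⟩ on H is not an action by quasi-isometries with respect to dist_{(H,T)}. -/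

import Mathlib

open Pointwise

/-- The word metric on a group `G` with respect to a (possibly infinite) generating set
`S`: `wordDist S g h` is the least `m` such that `g⁻¹ * h` is a product of `m` elements
of `S ∪ S⁻¹`. -/
noncomputable def wordDist {G : Type*} [Group G] (S : Set G) (g h : G) : ℝ :=
  (sInf {n : ℕ | g⁻¹ * h ∈ (S ∪ S⁻¹) ^ n} : ℕ)

/-- The generators `a`, `b`, `t` of the group `G = ⟨a, b, t ∣ t a t⁻¹ = b, t² = e⟩`. -/
inductive GGen : Type
  | a : GGen
  | b : GGen
  | t : GGen

/-- The relators `t a t⁻¹ b⁻¹` and `t²` of `G = ⟨a, b, t ∣ t a t⁻¹ = b, t² = e⟩`. -/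
def gRels : Set (FreeGroup GGen) :=
  {FreeGroup.of GGen.t * FreeGroup.of GGen.a * (FreeGroup.of GGen.t)⁻¹ *
      (FreeGroup.of GGen.b)⁻¹,
    FreeGroup.of GGen.t * FreeGroup.of GGen.t}

/-- The group `G = ⟨a, b, t ∣ t a t⁻¹ = b, t² = e⟩`. -/
abbrev Gp : Type := PresentedGroup gRels

/-- The generating set `S` of `G` consisting of the images of the elements of
`T = {b} ∪ {aᵏ : k ≠ 0}` together with `t`. -/
def Sset : Set Gp :=
  {PresentedGroup.of GGen.b, PresentedGroup.of GGen.t} ∪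
    {x | ∃ k : ℤ, k ≠ 0 ∧ x = PresentedGroup.of (rels := gRels) GGen.a ^ k}

/-- The generators `a`, `b` of the free group `F(a,b)`. -/
inductive Gen : Type
  | a : Gen
  | b : Gen

/-- The infinite generating set `T = {b} ∪ {aᵏ : k ∈ ℤ, k ≠ 0}` of the free group
`F(a,b)`. -/
def Tset : Set (FreeGroup Gen) :=
  {FreeGroup.of Gen.b} ∪ {x | ∃ k : ℤ, k ≠ 0 ∧ x = FreeGroup.of Gen.a ^ k}

/-- The automorphism of `F(a,b)` determined by `a ↦ b`, `b ↦ a`. -/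
def psi : FreeGroup Gen →* FreeGroup Gen :=
  FreeGroup.map fun g =>
    match g with
    | Gen.a => Gen.b
    | Gen.b => Gen.a

/-- The canonical homomorphism `ι : H = F(a,b) → G = ⟨a, b, t ∣ t a t⁻¹ = b, t² = e⟩`
sending `a ↦ a` and `b ↦ b`. -/
noncomputable def iota : FreeGroup Gen →* Gp :=
  FreeGroup.lift fun g =>
    match g with
    | Gen.a => PresentedGroup.of GGen.a
    | Gen.b => PresentedGroup.of GGen.b

/-!
A homomorphism to `ℤ` that is bounded by `1` on a generating set bounds the word length from below.
Applied to the exponent sum of `b`, this shows that `bⁿ` has `T`-length exactly `n`, whereas every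
nontrivial power of `a` is itself a generator. The swap thus sends elements at distance `1` from the
identity to elements at arbitrarily large distance.
-/

section WordMetric

variable {G : Type*} [Group G] {S : Set G} {g h : G}

theorem exists_mem_union_inv_pow_of_mem_closure (hg : g ∈ Subgroup.closure S) :
    ∃ n : ℕ, g ∈ (S ∪ S⁻¹) ^ n := by
  rw [← Subgroup.mem_toSubmonoid, Subgroup.closure_toSubmonoid] at hg
  induction hg using Submonoid.closure_induction with
  | mem s hs => exact ⟨1, by rwa [pow_one]⟩
  | one => exact ⟨0, by rw [pow_zero, Set.mem_one]⟩
  | mul x y _ _ hx hy =>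
    obtain ⟨m, hm⟩ := hx
    obtain ⟨n, hn⟩ := hy
    exact ⟨m + n, pow_add (S ∪ S⁻¹) m n ▸ Set.mul_mem_mul hm hn⟩

theorem wordDist_le_of_mem_pow {n : ℕ} (hgh : g⁻¹ * h ∈ (S ∪ S⁻¹) ^ n) : wordDist S g h ≤ n :=
  Nat.cast_le.2 (Nat.sInf_le hgh)

theorem exists_wordDist_eq_and_mem_pow (hgh : g⁻¹ * h ∈ Subgroup.closure S) :
    ∃ n : ℕ, wordDist S g h = n ∧ g⁻¹ * h ∈ (S ∪ S⁻¹) ^ n :=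
  ⟨_, rfl, Nat.sInf_mem (exists_mem_union_inv_pow_of_mem_closure hgh)⟩

theorem groupSeminorm_le_mul_of_mem_pow (N : GroupSeminorm G) {K : ℝ} (hN : ∀ s ∈ S, N s ≤ K)
    {n : ℕ} (hg : g ∈ (S ∪ S⁻¹) ^ n) : N g ≤ K * n := by
  have le_of_mem_union_inv : ∀ s ∈ S ∪ S⁻¹, N s ≤ K := by
    rintro s (hs | hs)
    · exact hN s hs
    · rw [← map_inv_eq_map N]
      exact hN s⁻¹ hs
  induction n generalizing g with
  | zero =>
    rw [pow_zero, Set.mem_one] at hg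
    simp [hg]
  | succ n ih =>
    rw [pow_succ] at hg
    obtain ⟨x, hx, s, hs, rfl⟩ := Set.mem_mul.1 hg
    calc N (x * s) ≤ N x + N s := map_mul_le_add N x s
      _ ≤ K * n + K := add_le_add (ih hx) (le_of_mem_union_inv s hs)
      _ = K * (n + 1 : ℕ) := by push_cast; ring

theorem groupSeminorm_le_mul_wordDist (N : GroupSeminorm G) {K : ℝ} (hN : ∀ s ∈ S, N s ≤ K)
    (hgh : g⁻¹ * h ∈ Subgroup.closure S) : N (g⁻¹ * h) ≤ K * wordDist S g h := by
  obtain ⟨n, hn, hmem⟩ := exists_wordDist_eq_and_mem_pow hgh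
  rw [hn]
  exact groupSeminorm_le_mul_of_mem_pow N hN hmem

theorem wordDist_eq_one (hS : g⁻¹ * h ∈ S) (hne : g ≠ h) : wordDist S g h = 1 := by
  apply le_antisymm
  · have hmem : g⁻¹ * h ∈ (S ∪ S⁻¹) ^ 1 := by
      rw [pow_one]
      exact Or.inl hS
    exact_mod_cast wordDist_le_of_mem_pow hmem
  · obtain ⟨n, hn, hmem⟩ := exists_wordDist_eq_and_mem_pow (Subgroup.subset_closure hS)
    have hn0 : n ≠ 0 := by
      rintro rfl
      rw [pow_zero, Set.mem_one, inv_mul_eq_one] at hmem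
      exact hne hmem
    rw [hn]
    exact_mod_cast Nat.one_le_iff_ne_zero.2 hn0

end WordMetric

section ExponentSum

variable {α : Type*}

open Classical in
/-- The exponent sum of the generator `x` in a word of the free group. It takes values in
`Multiplicative ℤ`, so that it is a homomorphism of multiplicative groups. -/
noncomputable def exponentSum (x : α) : FreeGroup α →* Multiplicative ℤ :=
  FreeGroup.lift (Pi.mulSingle x (Multiplicative.ofAdd 1))

theorem exponentSum_of_self (x : α) :
    exponentSum x (FreeGroup.of x) = Multiplicative.ofAdd 1 := by
  simp [exponentSum]

theorem exponentSum_of_ne {x y : α} (hyx : y ≠ x) : exponentSum x (FreeGroup.of y) = 1 := by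
  simp [exponentSum, hyx]

theorem norm_exponentSum_of_pow (x : α) (n : ℕ) :
    ‖exponentSum x (FreeGroup.of x ^ n)‖ = n := by
  rw [map_pow, exponentSum_of_self, ← ofAdd_nsmul, norm_ofAdd]
  simp

end ExponentSum

theorem of_b_mem_Tset : FreeGroup.of Gen.b ∈ Tset :=
  Or.inl rfl

theorem of_a_pow_mem_Tset {n : ℕ} (hn : n ≠ 0) : FreeGroup.of Gen.a ^ n ∈ Tset :=
  Or.inr ⟨n, Nat.cast_ne_zero.2 hn, (zpow_natCast _ n).symm⟩

theorem norm_exponentSum_b_le_one_of_mem_Tset {s : FreeGroup Gen} (hs : s ∈ Tset) :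
    ‖exponentSum Gen.b s‖ ≤ 1 := by
  rcases hs with rfl | ⟨k, -, rfl⟩
  · simp [exponentSum_of_self]
  · have hab : Gen.a ≠ Gen.b := nofun
    simp [exponentSum_of_ne hab]

theorem wordDist_Tset_one_of_a_pow {n : ℕ} (hn : n ≠ 0) :
    wordDist Tset 1 (FreeGroup.of Gen.a ^ n) = 1 := by
  have hne : FreeGroup.of Gen.a ^ n ≠ 1 := (pow_eq_one_iff_left hn).not.2 (FreeGroup.of_ne_one _)
  apply wordDist_eq_one _ hne.symm
  rw [inv_one, one_mul]
  exact of_a_pow_mem_Tset hn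

theorem wordDist_Tset_one_of_b_pow (n : ℕ) :
    wordDist Tset 1 (FreeGroup.of Gen.b ^ n) = n := by
  apply le_antisymm
  · apply wordDist_le_of_mem_pow
    rw [inv_one, one_mul]
    exact Set.pow_mem_pow (Or.inl of_b_mem_Tset)
  · let N : GroupSeminorm (FreeGroup Gen) := (normGroupSeminorm _).comp (exponentSum Gen.b)
    have hmem : 1⁻¹ * FreeGroup.of Gen.b ^ n ∈ Subgroup.closure Tset := by
      rw [inv_one, one_mul]
      exact pow_mem (Subgroup.subset_closure of_b_mem_Tset) n
    calc (n : ℝ) = N (1⁻¹ * FreeGroup.of Gen.b ^ n) := by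
          rw [inv_one, one_mul]
          exact (norm_exponentSum_of_pow Gen.b n).symm
      _ ≤ 1 * wordDist Tset 1 (FreeGroup.of Gen.b ^ n) :=
          groupSeminorm_le_mul_wordDist N (fun _ => norm_exponentSum_b_le_one_of_mem_Tset) hmem
      _ = wordDist Tset 1 (FreeGroup.of Gen.b ^ n) := one_mul _

theorem psi_of_a_pow (n : ℕ) : psi (FreeGroup.of Gen.a ^ n) = FreeGroup.of Gen.b ^ n := by
  simp [psi]

theorem conj_t_a : MulAut.conj (PresentedGroup.of (rels := gRels) GGen.t)
    (PresentedGroup.of GGen.a) = PresentedGroup.of GGen.b :=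
  PresentedGroup.mk_eq_mk_of_mul_inv_mem (Set.mem_insert _ _)

theorem t_mul_t : PresentedGroup.of (rels := gRels) GGen.t * PresentedGroup.of GGen.t = 1 :=
  PresentedGroup.one_of_mem (Set.mem_insert_of_mem _ rfl)

theorem conj_t_b : MulAut.conj (PresentedGroup.of (rels := gRels) GGen.t)
    (PresentedGroup.of GGen.b) = PresentedGroup.of GGen.a := by
  rw [← conj_t_a, ← MulAut.mul_apply, ← map_mul, t_mul_t, map_one, MulAut.one_apply]

theorem iota_comp_psi : iota.comp psi =
    (MulAut.conj (PresentedGroup.of (rels := gRels) GGen.t)).toMonoidHom.comp iota := by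
  ext (_ | _)
  · simpa [iota, psi] using conj_t_a.symm
  · simpa [iota, psi] using conj_t_b.symm

/-- The automorphism `ψ` of `H = F(a,b)` swapping `a` and `b` is not
a quasi-isometry of `(H, dist_T)`: there are no `L ≥ 1`, `C ≥ 0` with
`dist_T(ψ h, ψ h') ≤ L · dist_T(h,h') + C` for all `h, h'`.  Consequently, since `ψ`
realises the conjugation action of `t ∈ G = ⟨a, b, t ∣ t a t⁻¹ = b, t² = e⟩` on `H`
(i.e. `ι(ψ h) = t · ι(h) · t⁻¹` for all `h`), this conjugation action is not an action
by quasi-isometries with respect to `dist_T`. -/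
theorem statement10 :
    (¬ ∃ L C : ℝ, 1 ≤ L ∧ 0 ≤ C ∧
        ∀ h h' : FreeGroup Gen,
          wordDist Tset (psi h) (psi h') ≤ L * wordDist Tset h h' + C) ∧
      ∀ h : FreeGroup Gen,
        iota (psi h) =
          PresentedGroup.of (rels := gRels) GGen.t * iota h *
            (PresentedGroup.of (rels := gRels) GGen.t)⁻¹ := by
  refine ⟨?_, DFunLike.congr_fun iota_comp_psi⟩
  rintro ⟨L, C, -, -, hLC⟩
  obtain ⟨n, hn⟩ := exists_nat_gt (L + C)
  have hdist := hLC 1 (FreeGroup.of Gen.a ^ (n + 1))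
  rw [map_one, psi_of_a_pow, wordDist_Tset_one_of_b_pow,
    wordDist_Tset_one_of_a_pow n.succ_ne_zero] at hdist
  push_cast at hdist
  linarith
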